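/- Let p be a prime number and let S = {v₁, v₂} be a p-orthonormal system in ℤ⁴ with |supp(S)| > 2. Then there exists v₃ ∈ ℤ⁴ such that ⟨v₁|v₃⟩ = 0, ⟨v₂|v₃⟩ = 0 and N(v₃) = p. -/

import Mathlib

/-- If `a`, `b` are orthogonal of norm `p` with a `2 × 2` minor (in the first two coordinates) prime
to `p`, then every vector orthogonal to both has norm divisible by `p`. -/
lemma dvd_norm_of_minor {p a0 a1 a2 a3 b0 b1 b2 b3 x0 x1 x2 x3 : ℤ} (hp : Prime p)
    (ha : a0 * a0 + a1 * a1 + a2 * a2 + a3 * a3 = p)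
    (hb : b0 * b0 + b1 * b1 + b2 * b2 + b3 * b3 = p)
    (hab : a0 * b0 + a1 * b1 + a2 * b2 + a3 * b3 = 0)
    (hax : a0 * x0 + a1 * x1 + a2 * x2 + a3 * x3 = 0)
    (hbx : b0 * x0 + b1 * x1 + b2 * x2 + b3 * x3 = 0)
    (hP : ¬ p ∣ a0 * b1 - a1 * b0) :
    p ∣ x0 * x0 + x1 * x1 + x2 * x2 + x3 * x3 := by
  have h0 : (a0 * b1 - a1 * b0) * x0
      = (a1 * b2 - a2 * b1) * x2 + (a1 * b3 - a3 * b1) * x3 := by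
    linear_combination b1 * hax - a1 * hbx
  have h1 : (a0 * b1 - a1 * b0) * x1
      = -((a0 * b2 - a2 * b0) * x2 + (a0 * b3 - a3 * b0) * x3) := by
    linear_combination a0 * hbx - b0 * hax
  have gram : ∀ a2 a3 b2 b3 : ℤ, a0 * a0 + a1 * a1 + a2 * a2 + a3 * a3 = p →
      b0 * b0 + b1 * b1 + b2 * b2 + b3 * b3 = p →
      a0 * b0 + a1 * b1 + a2 * b2 + a3 * b3 = 0 →
      (a0 * b1 - a1 * b0) ^ 2 + (a0 * b2 - a2 * b0) ^ 2 + (a1 * b2 - a2 * b1) ^ 2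
        = p * (p - a3 ^ 2 - b3 ^ 2) := by
    intro a2 a3 b2 b3 ha hb hab
    have ha' : a0 * a0 + a1 * a1 + a2 * a2 = p - a3 ^ 2 := by linear_combination ha
    have hb' : b0 * b0 + b1 * b1 + b2 * b2 = p - b3 ^ 2 := by linear_combination hb
    have hab' : a0 * b0 + a1 * b1 + a2 * b2 = -(a3 * b3) := by linear_combination hab
    calc _ = (a0 * a0 + a1 * a1 + a2 * a2) * (b0 * b0 + b1 * b1 + b2 * b2)
          - (a0 * b0 + a1 * b1 + a2 * b2) ^ 2 := by ring
      _ = _ := by rw [ha', hb', hab']; ring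
  have g3 := gram a2 a3 b2 b3 ha hb hab
  have g2 := gram a3 a2 b3 b2 (by linarith) (by linarith) (by linarith)
  have g23 : (a0 * b2 - a2 * b0) * (a0 * b3 - a3 * b0) + (a1 * b2 - a2 * b1) * (a1 * b3 - a3 * b1)
      = p * (a2 * a3 + b2 * b3) := by
    linear_combination b2 * b3 * ha + a2 * a3 * hb - (a2 * b3 + a3 * b2) * hab
  have key : (a0 * b1 - a1 * b0) ^ 2 * (x0 * x0 + x1 * x1 + x2 * x2 + x3 * x3)
      = p * ((p - a3 ^ 2 - b3 ^ 2) * x2 ^ 2 + (p - a2 ^ 2 - b2 ^ 2) * x3 ^ 2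
        + 2 * (a2 * a3 + b2 * b3) * (x2 * x3)) := by
    calc _ = ((a0 * b1 - a1 * b0) * x0) ^ 2 + ((a0 * b1 - a1 * b0) * x1) ^ 2
          + (a0 * b1 - a1 * b0) ^ 2 * (x2 * x2 + x3 * x3) := by ring
      _ = _ := by
        rw [h0, h1]
        linear_combination x2 ^ 2 * g3 + x3 ^ 2 * g2 + 2 * x2 * x3 * g23
  exact (hp.dvd_or_dvd (Dvd.intro _ key.symm)).resolve_left fun h => hP (hp.dvd_of_dvd_pow h)

/-- Some `2 × 2` minor of an orthogonal pair of vectors of norm `p` is prime to `p` if the pair is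
supported on at least three coordinates. -/
lemma exists_minor_not_dvd {p : ℤ} (hp : 0 < p) (v w : Fin 4 → ℤ)
    (hv : ∑ t, v t * v t = p) (hw : ∑ t, w t * w t = p) (ho : ∑ t, v t * w t = 0)
    (hsupp : 2 < (Finset.univ.filter (fun i : Fin 4 => v i ≠ 0 ∨ w i ≠ 0)).card) :
    ∃ i j, ¬ p ∣ v i * w j - v j * w i := by
  by_contra! h
  have hrow : ∀ i, ∑ j, (v i * w j - v j * w i) ^ 2 = p * (v i ^ 2 + w i ^ 2) := by
    intro i
    calc _ = v i ^ 2 * ∑ t, w t * w t + w i ^ 2 * ∑ t, v t * v t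
          - 2 * v i * w i * ∑ t, v t * w t := by
            simp only [Finset.mul_sum, ← Finset.sum_add_distrib, ← Finset.sum_sub_distrib]
            exact Finset.sum_congr rfl fun t _ => by ring
      _ = _ := by rw [hv, hw, ho]; ring
  have hdvd : ∀ i, p ∣ v i ^ 2 + w i ^ 2 := by
    intro i
    have h2 : p * p ∣ p * (v i ^ 2 + w i ^ 2) := by
      rw [← hrow i, ← sq]
      exact Finset.dvd_sum fun j _ => pow_dvd_pow_of_dvd (h i j) 2
    exact Int.dvd_of_mul_dvd_mul_left hp.ne' h2
  have hle := Finset.card_nsmul_le_sum (Finset.univ.filter fun i : Fin 4 => v i ≠ 0 ∨ w i ≠ 0)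
    (fun i => v i ^ 2 + w i ^ 2) p (by
      intro i hi
      refine Int.le_of_dvd ?_ (hdvd i)
      rcases (Finset.mem_filter.mp hi).2 with h0 | h0 <;> positivity)
  have hle' : ∑ i ∈ Finset.univ.filter (fun i : Fin 4 => v i ≠ 0 ∨ w i ≠ 0), (v i ^ 2 + w i ^ 2)
      ≤ ∑ i, (v i ^ 2 + w i ^ 2) :=
    Finset.sum_le_sum_of_subset_of_nonneg (Finset.filter_subset _ _) fun _ _ _ => by positivity
  have hsum : ∑ i, (v i ^ 2 + w i ^ 2) = 2 * p := by
    simp only [Finset.sum_add_distrib, sq, hv, hw]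
    ring
  rw [nsmul_eq_mul] at hle
  have hc : (3 : ℤ) ≤ ((Finset.univ.filter fun i : Fin 4 => v i ≠ 0 ∨ w i ≠ 0).card : ℤ) := by
    exact_mod_cast hsupp
  nlinarith

lemma dvd_norm_of_orthogonal {p : ℤ} (hp : Prime p) (v w x : Fin 4 → ℤ)
    (hv : ∑ t, v t * v t = p) (hw : ∑ t, w t * w t = p) (ho : ∑ t, v t * w t = 0)
    (hvx : ∑ t, v t * x t = 0) (hwx : ∑ t, w t * x t = 0) {i j : Fin 4}
    (hij : ¬ p ∣ v i * w j - v j * w i) : p ∣ ∑ t, x t * x t := by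
  have hne : i ≠ j := by
    rintro rfl
    simp at hij
  obtain ⟨k, l, hsum⟩ : ∃ k l : Fin 4, ∀ f : Fin 4 → ℤ, ∑ t, f t = f i + f j + f k + f l := by
    have hkl : ∃ k l : Fin 4, [i, j, k, l].Nodup := by
      clear hij
      revert i j
      decide
    obtain ⟨k, l, hnd⟩ := hkl
    refine ⟨k, l, fun f => ?_⟩
    have huniv : (Finset.univ : Finset (Fin 4)) = [i, j, k, l].toFinset :=
      (Finset.eq_univ_of_card _ (by rw [List.toFinset_card_of_nodup hnd]; rfl)).symm
    rw [huniv, List.sum_toFinset _ hnd]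
    simp [add_assoc]
  rw [hsum] at *
  exact dvd_norm_of_minor hp hv hw ho hvx hwx hij

/-- The cross product of three vectors in `ℤ⁴`, orthogonal to each of them. -/
def cross (v w c : Fin 4 → ℤ) : Fin 4 → ℤ := fun t =>
  (Matrix.of ![v, w, c, Pi.single t 1]).det

lemma sum_cross_mul (v w c x : Fin 4 → ℤ) :
    ∑ t, cross v w c t * x t = (Matrix.of ![v, w, c, x]).det := by
  simp [cross, Matrix.det_succ_row_zero, Fin.sum_univ_succ, Fin.succAbove,
    Pi.single_apply]
  ring

lemma sum_mul_cross_left (v w c : Fin 4 → ℤ) : ∑ t, v t * cross v w c t = 0 := by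
  simp only [mul_comm (v _), sum_cross_mul]
  exact Matrix.det_zero_of_row_eq (i := 0) (j := 3) (by decide) rfl

lemma sum_mul_cross_right (v w c : Fin 4 → ℤ) : ∑ t, w t * cross v w c t = 0 := by
  simp only [mul_comm (w _), sum_cross_mul]
  exact Matrix.det_zero_of_row_eq (i := 1) (j := 3) (by decide) rfl

lemma det_sq_eq_gram (v w c x : Fin 4 → ℤ) :
    (Matrix.of ![v, w, c, x]).det ^ 2
      = Matrix.det (.of fun i j => ∑ t, (![v, w, c, x] i t) * (![v, w, c, x] j t)) := by
  have h := Matrix.det_mul (Matrix.of ![v, w, c, x]) (Matrix.of ![v, w, c, x]).transpose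
  rw [Matrix.det_transpose] at h
  rw [sq]
  exact h.symm

/-- Lagrange's identity in the plane orthogonal to `v` and `w`, for `cross v w c` and `x`. -/
lemma norm_cross_mul_norm {p : ℤ} (v w c x : Fin 4 → ℤ)
    (hv : ∑ t, v t * v t = p) (hw : ∑ t, w t * w t = p) (ho : ∑ t, v t * w t = 0)
    (hvx : ∑ t, v t * x t = 0) (hwx : ∑ t, w t * x t = 0) (hcx : ∑ t, c t * x t = 1) :
    (∑ t, cross v w c t * cross v w c t) * (∑ t, x t * x t)
      = (∑ t, cross v w c t * x t) ^ 2 + p ^ 2 := by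
  have hN : ∑ t, cross v w c t * cross v w c t
      = p ^ 2 * (∑ t, c t * c t) - p * ((∑ t, v t * c t) ^ 2 + (∑ t, w t * c t) ^ 2) := by
    have hgram : ∑ t, cross v w c t * cross v w c t
        = (∑ t, v t * v t) * (∑ t, w t * w t) * (∑ t, c t * c t)
          + 2 * (∑ t, v t * w t) * (∑ t, w t * c t) * (∑ t, v t * c t)
          - (∑ t, v t * v t) * (∑ t, w t * c t) ^ 2 - (∑ t, w t * w t) * (∑ t, v t * c t) ^ 2
          - (∑ t, c t * c t) * (∑ t, v t * w t) ^ 2 := by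
      simp [cross, Matrix.det_succ_row_zero, Fin.sum_univ_succ, Fin.succAbove,
        Pi.single_apply]
      ring
    rw [hgram, hv, hw, ho]
    ring
  have hdet := det_sq_eq_gram v w c x
  rw [hN, sum_cross_mul, hdet]
  have hwv : ∑ t, w t * v t = 0 := by simpa only [mul_comm] using ho
  have hxv : ∑ t, x t * v t = 0 := by simpa only [mul_comm] using hvx
  have hxw : ∑ t, x t * w t = 0 := by simpa only [mul_comm] using hwx
  have hxc : ∑ t, x t * c t = 1 := by simpa only [mul_comm] using hcx
  have hcv : ∑ t, c t * v t = ∑ t, v t * c t := by simp only [mul_comm]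
  have hcw : ∑ t, c t * w t = ∑ t, w t * c t := by simp only [mul_comm]
  have hM : (Matrix.of fun i j => ∑ t, (![v, w, c, x] i t) * (![v, w, c, x] j t))
      = !![p, 0, ∑ t, v t * c t, 0; 0, p, ∑ t, w t * c t, 0;
          ∑ t, v t * c t, ∑ t, w t * c t, ∑ t, c t * c t, 1; 0, 0, 1, ∑ t, x t * x t] := by
    ext i j
    fin_cases i <;> fin_cases j <;> simp [*]
  rw [hM]
  generalize ∑ t, v t * c t = a
  generalize ∑ t, w t * c t = b
  generalize ∑ t, c t * c t = d
  generalize ∑ t, x t * x t = m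
  simp [Matrix.det_succ_row_zero, Fin.sum_univ_succ, Fin.succAbove]
  ring

lemma exists_ne_zero_orthogonal (v w : Fin 4 → ℤ) :
    ∃ x : Fin 4 → ℤ, x ≠ 0 ∧ ∑ t, v t * x t = 0 ∧ ∑ t, w t * x t = 0 := by
  have hdet : Matrix.det (Matrix.of ![v, w, v, w]) = 0 :=
    Matrix.det_zero_of_row_eq (i := 0) (j := 2) (by decide) rfl
  obtain ⟨x, hx, hmul⟩ := Matrix.exists_mulVec_eq_zero_iff.mpr hdet
  exact ⟨x, hx, congrFun hmul 0, congrFun hmul 1⟩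

/-- A nonzero vector of minimal norm in the plane orthogonal to `v` and `w`. -/
lemma exists_minimal_orthogonal (v w : Fin 4 → ℤ) :
    ∃ x : Fin 4 → ℤ, x ≠ 0 ∧ ∑ t, v t * x t = 0 ∧ ∑ t, w t * x t = 0 ∧
      ∀ z : Fin 4 → ℤ, z ≠ 0 → ∑ t, v t * z t = 0 → ∑ t, w t * z t = 0 →
        ∑ t, x t * x t ≤ ∑ t, z t * z t := by
  obtain ⟨x, hx, hmin⟩ := exists_minimalFor_of_wellFoundedLT
    (fun x : Fin 4 → ℤ => x ≠ 0 ∧ ∑ t, v t * x t = 0 ∧ ∑ t, w t * x t = 0)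
    (fun x => (∑ t, x t * x t).toNat) (exists_ne_zero_orthogonal v w)
  refine ⟨x, hx.1, hx.2.1, hx.2.2, fun z hz hvz hwz => ?_⟩
  have hpos : ∀ y : Fin 4 → ℤ, 0 ≤ ∑ t, y t * y t := fun y =>
    Finset.sum_nonneg fun t _ => mul_self_nonneg (y t)
  have hle : (∑ t, x t * x t).toNat ≤ (∑ t, z t * z t).toNat :=
    (le_total _ _).elim (fun h => h) (hmin (j := z) ⟨hz, hvz, hwz⟩)
  have := hpos x
  have := hpos z
  omega

lemma norm_pos {x : Fin 4 → ℤ} (hx : x ≠ 0) : 0 < ∑ t, x t * x t := by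
  obtain ⟨i, hi⟩ := Function.ne_iff.mp hx
  exact Finset.sum_pos' (fun t _ => mul_self_nonneg (x t))
    ⟨i, Finset.mem_univ i, mul_self_pos.mpr hi⟩

/-- A vector of minimal norm is primitive. -/
lemma exists_sum_mul_eq_one_of_minimal (v w x : Fin 4 → ℤ) (hx : x ≠ 0)
    (hvx : ∑ t, v t * x t = 0) (hwx : ∑ t, w t * x t = 0)
    (hmin : ∀ z : Fin 4 → ℤ, z ≠ 0 → ∑ t, v t * z t = 0 → ∑ t, w t * z t = 0 →
      ∑ t, x t * x t ≤ ∑ t, z t * z t) :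
    ∃ c : Fin 4 → ℤ, ∑ t, c t * x t = 1 := by
  have hg0 : Finset.univ.gcd x ≠ 0 := fun h =>
    hx (funext fun i => Finset.gcd_eq_zero_iff.mp h i (Finset.mem_univ i))
  have hdvd : ∀ t, Finset.univ.gcd x ∣ x t := fun t => Finset.gcd_dvd (Finset.mem_univ t)
  have hgnn : 0 ≤ Finset.univ.gcd x := by
    rw [← Finset.normalize_gcd]
    exact Int.nonneg_of_normalize_eq_self (normalize_idem _)
  obtain ⟨c, hc⟩ : ∃ c : Fin 4 → ℤ, ∑ t, c t * x t = Finset.univ.gcd x := by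
    obtain ⟨c, hc⟩ := Finset.gcd_eq_sum_mul Finset.univ x
    exact ⟨c, by simp only [hc, mul_comm]⟩
  generalize Finset.univ.gcd x = g at *
  choose y hy using hdvd
  have hlin : ∀ u : Fin 4 → ℤ, ∑ t, u t * x t = g * ∑ t, u t * y t := fun u => by
    rw [Finset.mul_sum]
    exact Finset.sum_congr rfl fun t _ => by rw [hy t]; ring
  have hy0 : y ≠ 0 := fun h => hx (funext fun t => by rw [hy t, h]; simp)
  have hle := hmin y hy0
    ((mul_eq_zero.mp ((hlin v).symm.trans hvx)).resolve_left hg0)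
    ((mul_eq_zero.mp ((hlin w).symm.trans hwx)).resolve_left hg0)
  have hnorm : ∑ t, x t * x t = g ^ 2 * ∑ t, y t * y t := by
    rw [Finset.mul_sum]
    exact Finset.sum_congr rfl fun t _ => by rw [hy t]; ring
  have hpos := norm_pos hy0
  have hg1 : g = 1 := by
    have : 0 < g := lt_of_le_of_ne hgnn (Ne.symm hg0)
    have hsq : g ^ 2 ≤ 1 := le_of_mul_le_mul_right (by linarith) hpos
    nlinarith
  exact ⟨c, hc.trans hg1⟩

/-- A two-vector p-orthonormal system in ℤ⁴ (p prime) with support of size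
greater than 2 admits a third orthogonal vector of norm p. -/
theorem two_vector_extension
    (p : ℕ) (hp : p.Prime) (v₁ v₂ : Fin 4 → ℤ)
    (hn1 : ∑ t, v₁ t * v₁ t = (p : ℤ)) (hn2 : ∑ t, v₂ t * v₂ t = (p : ℤ))
    (ho : ∑ t, v₁ t * v₂ t = 0)
    (hsupp : 2 < (Finset.univ.filter (fun i : Fin 4 => v₁ i ≠ 0 ∨ v₂ i ≠ 0)).card) :
    ∃ v₃ : Fin 4 → ℤ, (∑ t, v₁ t * v₃ t = 0) ∧ (∑ t, v₂ t * v₃ t = 0) ∧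
      ∑ t, v₃ t * v₃ t = (p : ℤ) := by
  have hp0 : (0 : ℤ) < p := by exact_mod_cast hp.pos
  obtain ⟨x, hx, hvx, hwx, hmin⟩ := exists_minimal_orthogonal v₁ v₂
  obtain ⟨i, j, hij⟩ := exists_minor_not_dvd hp0 v₁ v₂ hn1 hn2 ho hsupp
  have hdvd := dvd_norm_of_orthogonal (Nat.prime_iff_prime_int.mp hp) v₁ v₂ x
    hn1 hn2 ho hvx hwx hij
  obtain ⟨c, hc⟩ := exists_sum_mul_eq_one_of_minimal v₁ v₂ x hx hvx hwx hmin
  have hlag := norm_cross_mul_norm v₁ v₂ c x hn1 hn2 ho hvx hwx hc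
  have hvz := sum_mul_cross_left v₁ v₂ c
  have hwz := sum_mul_cross_right v₁ v₂ c
  refine ⟨x, hvx, hwx, ?_⟩
  generalize cross v₁ v₂ c = z at hlag hvz hwz
  have hm := norm_pos hx
  -- size reduction of `z` by `x`
  obtain ⟨n, hn⟩ : ∃ n : ℤ, 4 * (∑ t, z t * x t - n * ∑ t, x t * x t) ^ 2
      ≤ (∑ t, x t * x t) ^ 2 := by
    refine ⟨round ((∑ t, z t * x t : ℤ) / (∑ t, x t * x t : ℤ) : ℚ), ?_⟩
    generalize ∑ t, z t * x t = s
    generalize ∑ t, x t * x t = m at hm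
    have hmq : (0 : ℚ) < m := by exact_mod_cast hm
    have hr := sq_le_sq' (abs_le.mp (abs_sub_round ((s : ℚ) / m))).1
      (abs_le.mp (abs_sub_round ((s : ℚ) / m))).2
    have hs : (s : ℚ) - round ((s : ℚ) / m) * m = (s / m - round ((s : ℚ) / m)) * m := by
      field_simp
    have : 4 * ((s : ℚ) - round ((s : ℚ) / m) * m) ^ 2 ≤ (m : ℚ) ^ 2 := by
      rw [hs, mul_pow]
      nlinarith [sq_nonneg (m : ℚ)]
    exact_mod_cast this
  have hsub : ∀ u : Fin 4 → ℤ, ∑ t, u t * (z - n • x) t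
      = ∑ t, u t * z t - n * ∑ t, u t * x t := fun u => by
    rw [Finset.mul_sum, ← Finset.sum_sub_distrib]
    exact Finset.sum_congr rfl fun t _ => by simp; ring
  have hnorm : ∑ t, (z - n • x) t * (z - n • x) t
      = ∑ t, z t * z t - 2 * n * ∑ t, z t * x t + n ^ 2 * ∑ t, x t * x t := by
    rw [Finset.mul_sum, Finset.mul_sum, ← Finset.sum_sub_distrib, ← Finset.sum_add_distrib]
    exact Finset.sum_congr rfl fun t _ => by simp; ring
  have hprod : (∑ t, (z - n • x) t * (z - n • x) t) * ∑ t, x t * x t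
      = (∑ t, z t * x t - n * ∑ t, x t * x t) ^ 2 + (p : ℤ) ^ 2 := by
    rw [hnorm]
    linear_combination hlag
  have hne : z - n • x ≠ 0 := by
    intro h
    rw [h] at hprod
    simp only [Pi.zero_apply, mul_zero, Finset.sum_const_zero, zero_mul] at hprod
    nlinarith [sq_nonneg (∑ t, z t * x t - n * ∑ t, x t * x t)]
  have hle := hmin _ hne (by rw [hsub, hvz, hvx]; ring) (by rw [hsub, hwz, hwx]; ring)
  obtain ⟨k, hk⟩ := hdvd
  have hlt : ∑ t, x t * x t < 2 * p := by nlinarith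
  rw [hk] at hlt hm ⊢
  have hk0 : 0 < k := pos_of_mul_pos_right hm hp0.le
  have hk2 : k < 2 := by nlinarith
  rw [show k = 1 by omega, mul_one]
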